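/- arXiv:1110.1456 — 2 statements merged into one kernel-verified Lean document; each statement's English description precedes it below -/
import Mathlib

section
/- Let f, g ∈ R(x) and h = f + g. If val(f) = val(g) and there exists u ∈ ℝ^n such that for all sufficiently small ε > 0 one has val(f(p^{εu} x)) < val(g(p^{εu} x)), then val(h) = val(f) and lc(h) = lc(f) + lc(g). -/
noncomputable section
open Classical

/-- Multivariate polynomials in `n` variables over `ℂ`. -/
abbrev MvP (n : ℕ) := MvPolynomial (Fin n) ℂ

/-- The field of rational functions in `n` variables over `ℂ`. -/
abbrev KK (n : ℕ) := FractionRing (MvP n)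

/-- The minimal `ε`-weight `min_{m ∈ supp f} ∑ i, ε i * m i` of a multivariate
polynomial: the `p`-adic valuation of `f(p^{ε₁}x₁, …, p^{εₙ}xₙ)`. -/
def mvValEps (n : ℕ) (ε : Fin n → ℝ) (f : MvP n) : ℝ :=
  if h : f.support.Nonempty then f.support.inf' h (fun m => ∑ i, ε i * (m i : ℝ)) else 0

/-- `deg_ε(r)` for a rational function `r`: the `p`-adic valuation of
`r(p^{ε₁}x₁, …, p^{εₙ}xₙ)`, computed from a fraction representation of `r`. -/
def degEps (n : ℕ) (ε : Fin n → ℝ) (r : KK n) : ℝ :=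
  mvValEps n ε (IsLocalization.sec (nonZeroDivisors (MvP n)) r).1
  - mvValEps n ε ((IsLocalization.sec (nonZeroDivisors (MvP n)) r).2 : MvP n)

/-- The degree `deg(r) = -inf_{ε ≠ 0} deg_ε(r)/‖ε‖` of a rational function, with
`‖·‖` the supremum norm on `Fin n → ℝ`. -/
def degK (n : ℕ) (r : KK n) : ℝ :=
  -sInf {d : ℝ | ∃ ε : Fin n → ℝ, ε ≠ 0 ∧ d = degEps n ε r / ‖ε‖}

/-- Membership in `F(x)`: a Hahn series over `ℝ` with rational-function coefficients
whose exponent set is discrete and bounded below, i.e. only finitely many exponents lie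
below any given real number. -/
def FiniteBelow (n : ℕ) (f : HahnSeries ℝ (KK n)) : Prop :=
  ∀ r : ℝ, {t ∈ f.support | t ≤ r}.Finite

/-- Membership in `R(x) ⊂ F(x)`: the coefficients satisfy the degree-growth bound
`deg(a_t) ≤ C (t - val f)` for all exponents `t > val f`, for some constant `C`. -/
def InR (n : ℕ) (f : HahnSeries ℝ (KK n)) : Prop :=
  FiniteBelow n f ∧
    ∃ C : ℝ, ∀ t ∈ f.support, t ≠ f.order → degK n (f.coeff t) ≤ C * (t - f.order)

/-- The substitution `f(p^{ε₁}x₁, …, p^{εₙ}xₙ)` of a polynomial `f`, as a Hahn series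
in `p` with rational-function coefficients. -/
def polySubst (n : ℕ) (ε : Fin n → ℝ) (f : MvP n) : HahnSeries ℝ (KK n) :=
  ∑ m ∈ f.support, HahnSeries.single (∑ i, ε i * (m i : ℝ))
    (algebraMap (MvP n) (KK n) (MvPolynomial.monomial m (MvPolynomial.coeff m f)))

/-- The substitution `r(p^{ε₁}x₁, …, p^{εₙ}xₙ)` of a rational function `r`, as an
element of the field of Hahn series in `p` with rational-function coefficients. -/
def ratSubst (n : ℕ) (ε : Fin n → ℝ) (r : KK n) : HahnSeries ℝ (KK n) :=
  polySubst n ε (IsLocalization.sec (nonZeroDivisors (MvP n)) r).1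
  / polySubst n ε ((IsLocalization.sec (nonZeroDivisors (MvP n)) r).2 : MvP n)

/-- The substitution `f(p^{ε₁}x₁, …, p^{εₙ}xₙ)` of a series `f = ∑_t a_t p^t`: the
series `∑_t a_t(p^ε x) p^t` re-expanded in `p`, characterized coefficientwise by
`coeff s = ∑_t (a_t(p^ε x)).coeff (s - t)`; junk value `0` when no such Hahn series
exists. -/
def serSubst (n : ℕ) (ε : Fin n → ℝ) (f : HahnSeries ℝ (KK n)) : HahnSeries ℝ (KK n) :=
  if h : ∃ g : HahnSeries ℝ (KK n),
      ∀ s : ℝ, g.coeff s = ∑ᶠ t : ℝ, (ratSubst n ε (f.coeff t)).coeff (s - t)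
  then h.choose else 0

theorem aux_pwo (S : Set ℝ) (h : ∀ r : ℝ, (S ∩ Set.Iic r).IsPWO) : S.IsPWO := by
  rw [Set.isPWO_iff_isWF, Set.isWF_iff_no_descending_seq]
  intro x hx hmem
  have h1 := h (x 0)
  rw [Set.isPWO_iff_isWF, Set.isWF_iff_no_descending_seq] at h1
  exact h1 x hx (fun n => ⟨hmem n, hx.antitone (Nat.zero_le n)⟩)

theorem aux_finsum {K : Type*} [AddCommMonoid K] (a : ℝ → K) (h : ∑ᶠ t, a t ≠ 0) :
    ∃ t, a t ≠ 0 := by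
  by_contra hc
  push Not at hc
  exact h (by simp [hc])

theorem aux_div_mul {K : Type*} [Field K] (a b : HahnSeries ℝ K) (hb : b ≠ 0) :
    a / b * b = a := div_mul_cancel₀ a hb

theorem aux_div_ne {K : Type*} [Field K] (a b : HahnSeries ℝ K) (ha : a ≠ 0) (hb : b ≠ 0) :
    a / b ≠ 0 := div_ne_zero ha hb

theorem aux_zero_div {K : Type*} [Field K] (b : HahnSeries ℝ K) :
    0 / b = 0 := zero_div b

theorem aux_div_neg {K : Type*} [Field K] (a b c d : HahnSeries ℝ K) (hb : b ≠ 0) (hd : d ≠ 0)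
    (h : a * d = -(c * b)) : a / b = -(c / d) := by
  rw [← neg_div, div_eq_div_iff hb hd, h]
  ring

theorem aux_abs {K : Type*} [Field K] (S : Set ℝ) (o : ℝ) (A : ℝ → HahnSeries ℝ K)
    (hA : ∀ t, t ∉ S → A t = 0) (hfin : ∀ r : ℝ, {t ∈ S | t ≤ r}.Finite)
    (ho : ∀ t ∈ S, t ≠ o → o + (t - o) / 2 ≤ t + (A t).order)
    (hA0 : A o ≠ 0)
    (hgap : ∀ t ∈ S, t ≠ o → o + (A o).order < o + (t - o) / 2) :
    ∃ F : HahnSeries ℝ K, (∀ s, F.coeff s = ∑ᶠ t : ℝ, (A t).coeff (s - t)) ∧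
      F.order = o + (A o).order := by
  have key : ∀ s t, (A t).coeff (s - t) ≠ 0 → t ∈ S ∧ t + (A t).order ≤ s := by
    intro s t h
    refine ⟨?_, ?_⟩
    · by_contra hc
      rw [hA t hc] at h
      simp at h
    · have := HahnSeries.order_le_of_coeff_ne_zero h
      linarith
  have hpwo : (Function.support (fun s : ℝ => ∑ᶠ t : ℝ, (A t).coeff (s - t))).IsPWO := by
    apply aux_pwo
    intro r
    have hT := hfin (max o (2 * r - o))
    have hU : (⋃ t ∈ {t ∈ S | t ≤ max o (2 * r - o)},
        (Set.image (fun x => t + x) (A t).support)).IsPWO := by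
      have hU1 := (Finset.isPWO_bUnion hT.toFinset
        (f := fun t => (Set.image (fun x => t + x) (A t).support))).mpr
      simp only [Set.Finite.mem_toFinset] at hU1
      apply hU1
      intro t _
      exact (A t).isPWO_support.image_of_monotone (fun a b hab => by simpa using hab)
    refine hU.mono ?_
    rintro s ⟨hs, hsr⟩
    obtain ⟨t, ht⟩ := aux_finsum _ hs
    obtain ⟨h1, h2⟩ := key s t ht
    simp only [Set.mem_iUnion]
    refine ⟨t, ⟨h1, ?_⟩, s - t, ht, by ring⟩
    by_cases hto : t = o
    · exact le_max_of_le_left hto.le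
    · have := ho t h1 hto
      have hsr' : s ≤ r := hsr
      apply le_max_of_le_right
      linarith
  refine ⟨⟨_, hpwo⟩, fun s => rfl, ?_⟩
  have hc : (∑ᶠ t : ℝ, (A t).coeff (o + (A o).order - t)) = (A o).coeff (A o).order := by
    rw [finsum_eq_single _ o]
    · congr 1; ring
    · intro t hto
      by_contra hne
      obtain ⟨h1, h2⟩ := key _ t hne
      have := ho t h1 hto
      have := hgap t h1 hto
      linarith
  apply le_antisymm
  · apply HahnSeries.order_le_of_coeff_ne_zero
    change (∑ᶠ t : ℝ, (A t).coeff (o + (A o).order - t)) ≠ 0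
    rw [hc]
    exact HahnSeries.coeff_order_eq_zero.not.mpr hA0
  · rw [HahnSeries.le_order_iff_forall]
    · intro s hs
      by_contra hne
      obtain ⟨t, ht⟩ := aux_finsum _ hne
      obtain ⟨h1, h2⟩ := key s t ht
      by_cases hto : t = o
      · subst hto; linarith
      · have := ho t h1 hto
        have := hgap t h1 hto
        linarith
    · intro h0
      have : (∑ᶠ t : ℝ, (A t).coeff (o + (A o).order - t)) = 0 :=
        congrArg (fun F : HahnSeries ℝ K => F.coeff (o + (A o).order)) h0
      rw [hc] at this
      exact hA0 (HahnSeries.coeff_order_eq_zero.mp this)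

theorem aux_coeff (n : ℕ) (ε : Fin n → ℝ) (f : MvP n) (s : ℝ) :
    (polySubst n ε f).coeff s = algebraMap (MvP n) (KK n)
      (∑ m ∈ f.support with ∑ i, ε i * (m i : ℝ) = s,
        MvPolynomial.monomial m (MvPolynomial.coeff m f)) := by
  unfold polySubst
  rw [HahnSeries.coeff_sum, Finset.sum_filter, map_sum]
  refine Finset.sum_congr rfl fun m _ => ?_
  rw [HahnSeries.coeff_single]
  by_cases h : ∑ i, ε i * (m i : ℝ) = s
  · simp [h]
  · simp [h, Ne.symm h]

theorem aux_coeff_ne (n : ℕ) (ε : Fin n → ℝ) (f : MvP n) (m : Fin n →₀ ℕ)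
    (hm : m ∈ f.support) : (polySubst n ε f).coeff (∑ i, ε i * (m i : ℝ)) ≠ 0 := by
  rw [aux_coeff]
  intro h
  rw [map_eq_zero_iff _ (IsFractionRing.injective (MvP n) (KK n))] at h
  have := congrArg (MvPolynomial.coeff m) h
  rw [MvPolynomial.coeff_sum, Finset.sum_eq_single m] at this
  · simp at this
    exact (MvPolynomial.mem_support_iff.mp hm) this
  · intro b _ hb
    simp [MvPolynomial.coeff_monomial, hb]
  · intro h; exact absurd (by simpa using hm) h

theorem aux_ne (n : ℕ) (ε : Fin n → ℝ) (f : MvP n) (hf : f ≠ 0) : polySubst n ε f ≠ 0 := by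
  intro h
  obtain ⟨m, hm⟩ := MvPolynomial.support_nonempty.mpr hf
  exact aux_coeff_ne n ε f m hm (by rw [h]; simp)

theorem aux_order (n : ℕ) (ε : Fin n → ℝ) (f : MvP n) :
    (polySubst n ε f).order = mvValEps n ε f := by
  by_cases hf : f = 0
  · subst hf; simp [polySubst, mvValEps]
  have hne := MvPolynomial.support_nonempty.mpr hf
  unfold mvValEps
  rw [dif_pos hne]
  apply le_antisymm
  · rw [Finset.le_inf'_iff]
    intro m hm
    exact HahnSeries.order_le_of_coeff_ne_zero (aux_coeff_ne n ε f m hm)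
  · rw [HahnSeries.le_order_iff_forall (aux_ne n ε f hf)]
    intro s hs
    rw [aux_coeff, Finset.filter_false_of_mem]
    · simp
    · intro m hm he
      have := Finset.inf'_le (fun m : Fin n →₀ ℕ => ∑ i, ε i * (m i : ℝ)) hm
      simp only [he] at this
      linarith

theorem aux_aeval (n : ℕ) (ε : Fin n → ℝ) (f : MvP n) :
    polySubst n ε f = MvPolynomial.eval₂Hom
      ((HahnSeries.C (Γ := ℝ)).comp ((algebraMap (MvP n) (KK n)).comp MvPolynomial.C))
      (fun i => HahnSeries.single (ε i) (algebraMap (MvP n) (KK n) (MvPolynomial.X i))) f := by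
  rw [MvPolynomial.coe_eval₂Hom, MvPolynomial.eval₂_eq']
  unfold polySubst
  refine Finset.sum_congr rfl fun m _ => ?_
  have h : ∀ T : Finset (Fin n), (∏ i ∈ T,
      (HahnSeries.single (ε i) (algebraMap (MvP n) (KK n) (MvPolynomial.X i))) ^ m i) =
      HahnSeries.single (∑ i ∈ T, ε i * (m i : ℝ))
        (algebraMap (MvP n) (KK n) (∏ i ∈ T, MvPolynomial.X i ^ m i)) := by
    intro T
    induction T using Finset.induction_on with
    | empty => simp
    | insert a T ha ih =>
      rw [Finset.prod_insert ha, ih, Finset.sum_insert ha, Finset.prod_insert ha,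
        HahnSeries.single_pow, HahnSeries.single_mul_single]
      simp [mul_comm]
  rw [h, MvPolynomial.monomial_eq, Finsupp.prod_fintype _ _ (by simp)]
  simp [HahnSeries.C_apply, HahnSeries.single_mul_single]

theorem aux_mul (n : ℕ) (ε : Fin n → ℝ) (f g : MvP n) :
    polySubst n ε (f * g) = polySubst n ε f * polySubst n ε g := by
  simp only [aux_aeval, map_mul]

theorem aux_neg (n : ℕ) (ε : Fin n → ℝ) (f : MvP n) :
    polySubst n ε (-f) = - polySubst n ε f := by
  simp only [aux_aeval, map_neg]

theorem aux_ratneg (n : ℕ) (ε : Fin n → ℝ) (r : KK n) :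
    ratSubst n ε (-r) = - ratSubst n ε r := by
  unfold ratSubst
  have h1 := IsLocalization.sec_spec (nonZeroDivisors (MvP n)) r
  have h2 := IsLocalization.sec_spec (nonZeroDivisors (MvP n)) (-r)
  set p := IsLocalization.sec (nonZeroDivisors (MvP n)) r
  set q := IsLocalization.sec (nonZeroDivisors (MvP n)) (-r)
  have hp := aux_ne n ε _ (nonZeroDivisors.ne_zero p.2.2)
  have hq := aux_ne n ε _ (nonZeroDivisors.ne_zero q.2.2)
  have h : q.1 * (p.2 : MvP n) = -(p.1 * (q.2 : MvP n)) := by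
    apply IsFractionRing.injective (MvP n) (KK n)
    rw [map_mul, map_neg, map_mul, ← h1, ← h2]
    ring
  have h3 := congrArg (polySubst n ε) h
  rw [aux_neg, aux_mul, aux_mul] at h3
  exact aux_div_neg (K := KK n) _ _ _ _ hq hp h3

theorem aux_num (n : ℕ) (r : KK n) :
    (IsLocalization.sec (nonZeroDivisors (MvP n)) r).1 = 0 ↔ r = 0 := by
  have h1 := IsLocalization.sec_spec (nonZeroDivisors (MvP n)) r
  set p := IsLocalization.sec (nonZeroDivisors (MvP n)) r
  have hd : algebraMap (MvP n) (KK n) (p.2 : MvP n) ≠ 0 := by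
    rw [Ne, map_eq_zero_iff _ (IsFractionRing.injective (MvP n) (KK n))]
    exact nonZeroDivisors.ne_zero p.2.2
  rw [← map_eq_zero_iff _ (IsFractionRing.injective (MvP n) (KK n)), ← h1]
  simp [hd]

theorem aux_rat0 (n : ℕ) (ε : Fin n → ℝ) : ratSubst n ε 0 = 0 := by
  unfold ratSubst
  rw [(aux_num n 0).mpr rfl]
  have h0 : polySubst n ε 0 = 0 := by simp [polySubst]
  rw [h0]
  exact aux_zero_div (K := KK n) _

theorem aux_ratne (n : ℕ) (ε : Fin n → ℝ) (r : KK n) (hr : r ≠ 0) : ratSubst n ε r ≠ 0 := by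
  unfold ratSubst
  exact aux_div_ne (K := KK n) _ _ (aux_ne n ε _ ((aux_num n r).not.mpr hr))
    (aux_ne n ε _ (nonZeroDivisors.ne_zero (SetLike.coe_mem _)))

theorem aux_ratorder (n : ℕ) (ε : Fin n → ℝ) (r : KK n) (hr : r ≠ 0) :
    (ratSubst n ε r).order = degEps n ε r := by
  have hr' := aux_ratne n ε r hr
  unfold degEps
  rw [← aux_order, ← aux_order]
  have hd := aux_ne n ε _ (nonZeroDivisors.ne_zero
    (SetLike.coe_mem (IsLocalization.sec (nonZeroDivisors (MvP n)) r).2))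
  have h := HahnSeries.order_mul hr' hd
  have h2 : ratSubst n ε r * polySubst n ε
      ((IsLocalization.sec (nonZeroDivisors (MvP n)) r).2 : MvP n) =
      polySubst n ε (IsLocalization.sec (nonZeroDivisors (MvP n)) r).1 := by
    unfold ratSubst
    exact aux_div_mul (K := KK n) _ _ hd
  rw [h2] at h
  linarith

theorem aux_mvbound (n : ℕ) (f : MvP n) :
    ∃ M : ℝ, 0 ≤ M ∧ ∀ ε : Fin n → ℝ, |mvValEps n ε f| ≤ ‖ε‖ * M := by
  refine ⟨∑ m ∈ f.support, ∑ i, (m i : ℝ), by positivity, fun ε => ?_⟩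
  by_cases h : f.support.Nonempty
  · unfold mvValEps
    rw [dif_pos h]
    obtain ⟨m, hm, he⟩ := Finset.exists_mem_eq_inf' h (fun m => ∑ i, ε i * (m i : ℝ))
    rw [he]
    calc |∑ i, ε i * (m i : ℝ)| ≤ ∑ i, |ε i * (m i : ℝ)| := Finset.abs_sum_le_sum_abs _ _
      _ ≤ ∑ i, ‖ε‖ * (m i : ℝ) := by
        refine Finset.sum_le_sum fun i _ => ?_
        rw [abs_mul, Nat.abs_cast]
        exact mul_le_mul_of_nonneg_right (norm_le_pi_norm ε i) (Nat.cast_nonneg _)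
      _ = ‖ε‖ * ∑ i, (m i : ℝ) := by rw [Finset.mul_sum]
      _ ≤ _ := by
        refine mul_le_mul_of_nonneg_left ?_ (norm_nonneg _)
        exact Finset.single_le_sum (f := fun m : Fin n →₀ ℕ => ∑ i, (m i : ℝ))
          (fun m _ => by positivity) hm
  · unfold mvValEps
    rw [dif_neg h]
    simp only [abs_zero]
    positivity

theorem aux_degbound (n : ℕ) (r : KK n) :
    ∃ M : ℝ, 0 ≤ M ∧ ∀ ε : Fin n → ℝ, |degEps n ε r| ≤ ‖ε‖ * M := by
  obtain ⟨M, hM, h⟩ := aux_mvbound n (IsLocalization.sec (nonZeroDivisors (MvP n)) r).1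
  obtain ⟨N, hN, h'⟩ := aux_mvbound n
    ((IsLocalization.sec (nonZeroDivisors (MvP n)) r).2 : MvP n)
  refine ⟨M + N, by positivity, fun ε => ?_⟩
  unfold degEps
  refine (abs_sub _ _).trans ?_
  rw [mul_add]
  exact add_le_add (h ε) (h' ε)

theorem aux_degK (n : ℕ) (r : KK n) (ε : Fin n → ℝ) : -(‖ε‖ * degK n r) ≤ degEps n ε r := by
  obtain ⟨M, hM, h⟩ := aux_degbound n r
  by_cases h0 : ε = 0
  · have := h ε
    rw [h0] at this ⊢
    simp only [norm_zero, zero_mul, abs_nonpos_iff] at this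
    simp [this]
  · have hpos : 0 < ‖ε‖ := norm_pos_iff.mpr h0
    unfold degK
    have hb : BddBelow {d : ℝ | ∃ ε : Fin n → ℝ, ε ≠ 0 ∧ d = degEps n ε r / ‖ε‖} := by
      refine ⟨-M, ?_⟩
      rintro d ⟨e, he, rfl⟩
      rw [le_div_iff₀ (norm_pos_iff.mpr he)]
      have := (abs_le.mp (h e)).1
      linarith
    have := csInf_le hb ⟨ε, h0, rfl⟩
    rw [le_div_iff₀ hpos] at this
    linarith

theorem aux_gap (S : Set ℝ) (o : ℝ) (hS : ∀ t ∈ S, o ≤ t)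
    (hfin : ∀ r : ℝ, {t ∈ S | t ≤ r}.Finite) :
    ∃ δ : ℝ, 0 < δ ∧ ∀ t ∈ S, t ≠ o → δ ≤ t - o := by
  have hT : {t ∈ S | t ≤ o + 1 ∧ t ≠ o}.Finite :=
    (hfin (o + 1)).subset (fun t ht => ⟨ht.1, ht.2.1⟩)
  by_cases hne : {t ∈ S | t ≤ o + 1 ∧ t ≠ o}.Nonempty
  · obtain ⟨a, ha, hmin⟩ := Set.exists_min_image _ id hT hne
    have hao : o < a := lt_of_le_of_ne (hS a ha.1) (Ne.symm ha.2.2)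
    refine ⟨a - o, by linarith, fun t ht hto => ?_⟩
    by_cases h1 : t ≤ o + 1
    · have : a ≤ t := hmin t ⟨ht, h1, hto⟩
      linarith
    · have := ha.2.1
      linarith
  · refine ⟨1, one_pos, fun t ht hto => ?_⟩
    by_contra hc
    exact hne ⟨t, ht, by linarith, hto⟩

theorem aux_limit (n : ℕ) (f : HahnSeries ℝ (KK n)) (hf : f ≠ 0) (hfR : InR n f)
    (u : Fin n → ℝ) : ∃ ε₁ : ℝ, 0 < ε₁ ∧ ∀ ε : ℝ, 0 < ε → ε ≤ ε₁ →
      (serSubst n (ε • u) f).order =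
        f.order + (ratSubst n (ε • u) (f.coeff f.order)).order := by
  obtain ⟨hfin, C, hC⟩ := hfR
  have hle : ∀ t ∈ f.support, f.order ≤ t := fun t ht =>
    HahnSeries.order_le_of_coeff_ne_zero ht
  obtain ⟨δ, hδ, hgap⟩ := aux_gap f.support f.order hle hfin
  have hlc : f.coeff f.order ≠ 0 := HahnSeries.coeff_order_eq_zero.not.mpr hf
  obtain ⟨M, hM, hdeg⟩ := aux_degbound n (f.coeff f.order)
  have hD : 0 < 2 * (‖u‖ * |C| + 1) := by positivity
  have hE : 0 < 2 * (‖u‖ * M + 1) := by positivity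
  refine ⟨min (1 / (2 * (‖u‖ * |C| + 1))) (δ / (2 * (‖u‖ * M + 1))), by positivity,
    fun ε hε hεle => ?_⟩
  have h1 := hεle.trans (min_le_left _ _)
  have h2 := hεle.trans (min_le_right _ _)
  rw [le_div_iff₀ hD] at h1
  rw [le_div_iff₀ hE] at h2
  have hnorm : ‖ε • u‖ = ε * ‖u‖ := by rw [norm_smul, Real.norm_of_nonneg hε.le]
  obtain ⟨F, hF, hFo⟩ := aux_abs f.support f.order
    (fun t => ratSubst n (ε • u) (f.coeff t))
    (by
      intro t ht
      have : f.coeff t = 0 := by simpa using ht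
      simp only [this, aux_rat0])
    hfin
    (by
      intro t ht hto
      have ht' : f.coeff t ≠ 0 := ht
      rw [aux_ratorder n _ _ ht']
      have a1 := aux_degK n (f.coeff t) (ε • u)
      have a2 := hC t ht hto
      have a3 := hgap t ht hto
      rw [hnorm] at a1
      have a4 : degK n (f.coeff t) ≤ |C| * (t - f.order) :=
        a2.trans (mul_le_mul_of_nonneg_right (le_abs_self C) (by linarith))
      have a5 : ε * ‖u‖ * degK n (f.coeff t) ≤ ε * ‖u‖ * (|C| * (t - f.order)) :=
        mul_le_mul_of_nonneg_left a4 (by positivity)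
      have a6 : (ε * ‖u‖ * |C|) * (t - f.order) ≤ (1 / 2) * (t - f.order) :=
        mul_le_mul_of_nonneg_right (by linarith) (by linarith)
      linarith)
    (aux_ratne n _ _ hlc)
    (by
      intro t ht hto
      rw [aux_ratorder n _ _ hlc]
      have a1 := (abs_le.mp (hdeg (ε • u))).2
      rw [hnorm] at a1
      have a3 := hgap t ht hto
      linarith)
  have hex : ∃ g : HahnSeries ℝ (KK n),
      ∀ s : ℝ, g.coeff s = ∑ᶠ t : ℝ, (ratSubst n (ε • u) (f.coeff t)).coeff (s - t) :=
    ⟨F, hF⟩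
  have : serSubst n (ε • u) f = F := by
    unfold serSubst
    rw [dif_pos hex]
    ext s
    rw [hex.choose_spec s, hF s]
  rw [this, hFo]

/-- Let `f, g ∈ R(x)` (nonzero) and `h = f + g`.  If `val(f) = val(g)` and there exists
`u : Fin n → ℝ` such that for all sufficiently small `ε > 0` one has
`val(f(p^{εu} x)) < val(g(p^{εu} x))`, then `val(h) = val(f)` and
`lc(h) = lc(f) + lc(g)`. -/
theorem sum_equal_valuation (n : ℕ) (f g : HahnSeries ℝ (KK n))
    (hf : f ≠ 0) (hg : g ≠ 0) (hfR : InR n f) (hgR : InR n g)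
    (hval : f.order = g.order) (u : Fin n → ℝ)
    (hlt : ∃ ε₀ : ℝ, 0 < ε₀ ∧ ∀ ε : ℝ, 0 < ε → ε ≤ ε₀ →
        (serSubst n (ε • u) f).order < (serSubst n (ε • u) g).order) :
    (f + g).order = f.order ∧
      (f + g).coeff ((f + g).order) = f.coeff f.order + g.coeff g.order := by
  have hlf : f.coeff f.order ≠ 0 := HahnSeries.coeff_order_eq_zero.not.mpr hf
  have hne : f.coeff f.order + g.coeff g.order ≠ 0 := by
    intro h0
    have hg' : g.coeff g.order = -f.coeff f.order := (neg_eq_of_add_eq_zero_right h0).symm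
    obtain ⟨ε₀, hε₀, hlt⟩ := hlt
    obtain ⟨ε₁, hε₁, h1⟩ := aux_limit n f hf hfR u
    obtain ⟨ε₂, hε₂, h2⟩ := aux_limit n g hg hgR u
    have hpos : 0 < min ε₀ (min ε₁ ε₂) := by positivity
    have a0 := hlt _ hpos (min_le_left _ _)
    rw [h1 _ hpos ((min_le_right _ _).trans (min_le_left _ _)),
      h2 _ hpos ((min_le_right _ _).trans (min_le_right _ _)), hg', aux_ratneg,
      HahnSeries.order_neg, hval] at a0
    exact lt_irrefl _ a0
  have hc : (f + g).coeff f.order = f.coeff f.order + g.coeff g.order := by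
    rw [HahnSeries.coeff_add, hval]
  have ho : (f + g).order = f.order := by
    apply le_antisymm
    · exact HahnSeries.order_le_of_coeff_ne_zero (by rw [hc]; exact hne)
    · rw [HahnSeries.le_order_iff_forall (by rintro h; rw [h] at hc; exact hne (by simpa using hc.symm))]
      intro s hs
      rw [HahnSeries.coeff_add, HahnSeries.coeff_eq_zero_of_lt_order hs,
        HahnSeries.coeff_eq_zero_of_lt_order (hval ▸ hs), add_zero]
  exact ⟨ho, by rw [ho, hc]⟩
end
end

section
/- (Jacobi triple product) For 0 < |p| < 1 and x ≠ 0: (p;p)_∞ · θ(x;p) = ∑_{n∈ℤ} (-x)^n p^{n(n-1)/2}, where θ(x;p) = (x;p)_∞ (p/x;p)_∞ and (x;p)_∞ = ∏_{r≥0}(1 - x p^r). -/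
/-- The infinite `q`-Pochhammer symbol `(x; p)_∞ = ∏_{r ≥ 0} (1 - x p^r)`. -/
noncomputable def qPochInf (x p : ℂ) : ℂ := ∏' r : ℕ, (1 - x * p ^ r)

/-- The theta function `θ(x; p) = (x; p)_∞ (p/x; p)_∞`. -/
noncomputable def theta (x p : ℂ) : ℂ := qPochInf x p * qPochInf (p / x) p

open Filter Topology

/-- Finite Pochhammer `(p;p)_N`. -/
noncomputable def jtpP (p : ℂ) (N : ℕ) : ℂ := ∏ r ∈ Finset.range N, (1 - p * p ^ r)

/-- Reciprocal of `(p;p)_k`, zero for negative `k`. -/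
noncomputable def jtpQ (p : ℂ) (k : ℤ) : ℂ := if k < 0 then 0 else (jtpP p k.toNat)⁻¹

/-- General term of the theta series. -/
noncomputable def jtpG (p x : ℂ) (n : ℤ) : ℂ := (-x) ^ n * p ^ (n * (n - 1) / 2)

lemma jtp_factor_ne (p : ℂ) (hp1 : ‖p‖ < 1) (r : ℕ) : 1 - p * p ^ r ≠ 0 := by
  intro h
  have h1 : p ^ (r + 1) = 1 := by rw [pow_succ']; exact (sub_eq_zero.mp h).symm
  have h2 : ‖p‖ ^ (r + 1) = 1 := by rw [← norm_pow, h1, norm_one]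
  have h3 := pow_lt_one₀ (norm_nonneg p) hp1 (Nat.succ_ne_zero r)
  simp only [Nat.succ_eq_add_one] at h3
  linarith

lemma jtpP_ne (p : ℂ) (hp1 : ‖p‖ < 1) (N : ℕ) : jtpP p N ≠ 0 :=
  Finset.prod_ne_zero_iff.mpr fun r _ => jtp_factor_ne p hp1 r

lemma jtpQ_rec (p : ℂ) (hp1 : ‖p‖ < 1) (k : ℤ) :
    jtpQ p (k - 1) = (1 - p ^ k) * jtpQ p k := by
  rcases lt_trichotomy k 0 with h | h | h
  · simp [jtpQ, h, show k - 1 < 0 by omega]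
  · subst h; simp [jtpQ]
  · obtain ⟨m, rfl⟩ : ∃ m : ℕ, k = (m : ℤ) + 1 := ⟨(k - 1).toNat, by omega⟩
    have h1 : ¬ ((m : ℤ) + 1 < 0) := by omega
    have h2 : ((m : ℤ) + 1).toNat = m + 1 := by omega
    have h3 : ¬ ((m : ℤ) < 0) := by omega
    have e : p ^ ((m : ℤ) + 1) = p * p ^ m := by
      rw [← pow_succ']; exact_mod_cast zpow_natCast p (m + 1)
    have hf := jtp_factor_ne p hp1 m
    have hP := jtpP_ne p hp1 m
    have hs : jtpP p (m + 1) = jtpP p m * (1 - p * p ^ m) := by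
      simp [jtpP, Finset.prod_range_succ]
    simp only [jtpQ, add_sub_cancel_right, h1, h2, h3, if_false, Int.toNat_natCast, e, hs]
    field_simp

lemma jtpG_succ (p x : ℂ) (hp : p ≠ 0) (hx : x ≠ 0) (n : ℤ) :
    jtpG p x (n + 1) = jtpG p x n * (-x) * p ^ n := by
  have e : (n + 1) * (n + 1 - 1) / 2 = n * (n - 1) / 2 + n := by
    rw [show (n + 1) * (n + 1 - 1) = n * (n - 1) + n * 2 by ring]
    exact Int.add_mul_ediv_right _ _ (by norm_num)
  rw [jtpG, jtpG, e, zpow_add₀ hp, zpow_add_one₀ (neg_ne_zero.mpr hx)]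
  ring

lemma jtpG_ne (p x : ℂ) (hp : p ≠ 0) (hx : x ≠ 0) (n : ℤ) : jtpG p x n ≠ 0 :=
  mul_ne_zero (zpow_ne_zero _ (neg_ne_zero.mpr hx)) (zpow_ne_zero _ hp)

lemma jtpG_summable (p x : ℂ) (hp : p ≠ 0) (hp1 : ‖p‖ < 1) (hx : x ≠ 0) :
    Summable fun n : ℤ => ‖jtpG p x n‖ := by
  have ht := tendsto_pow_atTop_nhds_zero_of_lt_one (norm_nonneg p) hp1
  have hxn : ‖x‖ ≠ 0 := norm_ne_zero_iff.mpr hx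
  have hpn : ‖p‖ ≠ 0 := norm_ne_zero_iff.mpr hp
  apply Summable.of_nat_of_neg
  · refine summable_of_ratio_test_tendsto_lt_one (l := 0) one_pos
      (Eventually.of_forall fun n => norm_ne_zero_iff.mpr (jtpG_ne p x hp hx _)) ?_
    have h := ht.const_mul ‖x‖
    rw [mul_zero] at h
    refine h.congr fun n => ?_
    have hg := norm_ne_zero_iff.mpr (jtpG_ne p x hp hx n)
    rw [norm_norm, norm_norm, Nat.cast_succ, jtpG_succ p x hp hx]
    simp only [norm_mul, norm_neg, zpow_natCast, norm_pow]
    field_simp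
  · refine summable_of_ratio_test_tendsto_lt_one (l := 0) one_pos
      (Eventually.of_forall fun n => norm_ne_zero_iff.mpr (jtpG_ne p x hp hx _)) ?_
    have h := ht.const_mul (‖p‖ / ‖x‖)
    rw [mul_zero] at h
    refine h.congr fun n => ?_
    have hg := norm_ne_zero_iff.mpr (jtpG_ne p x hp hx (-((n : ℤ) + 1)))
    have e := jtpG_succ p x hp hx (-((n : ℤ) + 1))
    rw [show -((n : ℤ) + 1) + 1 = -n by ring] at e
    rw [norm_norm, norm_norm, Nat.cast_succ, e, zpow_neg, zpow_add_one₀ hp]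
    simp only [norm_mul, norm_neg, zpow_natCast, norm_pow, norm_inv]
    field_simp

/-- Finite Jacobi triple product. -/
lemma jtp_finite (p x : ℂ) (hp : p ≠ 0) (hp1 : ‖p‖ < 1) (hx : x ≠ 0) (N : ℕ) :
    HasSum (fun n : ℤ => jtpG p x n * (jtpP p (2 * N) * jtpQ p (N + n) * jtpQ p (N - n)))
      ((∏ r ∈ Finset.range N, (1 - x * p ^ r)) * ∏ r ∈ Finset.range N, (1 - p / x * p ^ r)) := by
  induction N with
  | zero =>
    have h := hasSum_single (f := fun n : ℤ => jtpG p x n *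
      (jtpP p (2 * 0) * jtpQ p ((0 : ℕ) + n) * jtpQ p ((0 : ℕ) - n))) 0 (by
        intro n hn
        rcases lt_or_gt_of_ne hn with h | h
        · simp [jtpQ, h]
        · simp [jtpQ, h])
    simpa [jtpG, jtpP, jtpQ] using h
  | succ N ih =>
    have h1 := ih.mul_left (1 + p ^ (2 * N + 1))
    have h2 := ((Equiv.subRight (1 : ℤ)).hasSum_iff.mpr ih).mul_left (- x * p ^ N)
    have h3 := ((Equiv.addRight (1 : ℤ)).hasSum_iff.mpr ih).mul_left (- (p ^ (N + 1) / x))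
    convert (h1.add h2).add h3 using 1
    · rfl
    · funext n
      simp only [Function.comp, Equiv.subRight_apply, Equiv.coe_addRight]
      have g1 := jtpG_succ p x hp hx n
      have g0 := jtpG_succ p x hp hx (n - 1)
      rw [sub_add_cancel] at g0
      have a1 := jtpQ_rec p hp1 (N + 1 + n)
      have a2 := jtpQ_rec p hp1 (N + n)
      have b1 := jtpQ_rec p hp1 (N + 1 - n)
      have b2 := jtpQ_rec p hp1 (N - n)
      rw [show (N : ℤ) + 1 + n - 1 = N + n by ring] at a1
      rw [show (N : ℤ) + 1 - n - 1 = N - n by ring] at b1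
      have hP : jtpP p (2 * (N + 1)) =
          jtpP p (2 * N) * (1 - p * p ^ (2 * N)) * (1 - p * p ^ (2 * N + 1)) := by
        simp [jtpP, Finset.prod_range_succ, Nat.mul_add]
      rw [show (N : ℤ) + (n - 1) = N + n - 1 by ring,
        show (N : ℤ) - (n - 1) = N + 1 - n by ring,
        show (N : ℤ) + (n + 1) = N + 1 + n by ring,
        show (N : ℤ) - (n + 1) = N - n - 1 by ring, a2, b2, a1, b1, hP, g1, g0, Nat.cast_succ]
      simp only [zpow_add₀ hp, zpow_sub₀ hp, zpow_natCast, zpow_one, pow_add, pow_mul', pow_one]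
      have hv : p ^ n ≠ 0 := zpow_ne_zero _ hp
      generalize p ^ n = v at *
      generalize p ^ N = u at *
      field_simp
      ring
    · rw [Finset.prod_range_succ, Finset.prod_range_succ]
      simp only [pow_add, pow_mul', pow_one]
      field_simp
      ring

lemma jtp_summable (p y : ℂ) (hp1 : ‖p‖ < 1) : Summable fun r : ℕ => ‖-(y * p ^ r)‖ := by
  simp only [norm_neg, norm_mul, norm_pow]
  exact (summable_geometric_of_lt_one (norm_nonneg p) hp1).mul_left _

lemma jtp_tendsto (p y : ℂ) (hp1 : ‖p‖ < 1) :
    Tendsto (fun N : ℕ => ∏ r ∈ Finset.range N, (1 - y * p ^ r)) atTop (𝓝 (qPochInf y p)) := by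
  have h := (multipliable_one_add_of_summable (jtp_summable p y hp1)).tendsto_prod_tprod_nat
  simpa only [qPochInf, ← sub_eq_add_neg] using h

lemma jtp_ne (p : ℂ) (hp1 : ‖p‖ < 1) : qPochInf p p ≠ 0 := by
  have h := tprod_one_add_ne_zero_of_summable (f := fun r : ℕ => -(p * p ^ r))
    (fun r => by simpa only [← sub_eq_add_neg] using jtp_factor_ne p hp1 r)
    (jtp_summable p p hp1)
  simpa only [qPochInf, ← sub_eq_add_neg] using h

lemma jtpQ_tendsto (p : ℂ) (hp1 : ‖p‖ < 1) :
    Tendsto (jtpQ p) atTop (𝓝 (qPochInf p p)⁻¹) := by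
  have hP : Tendsto (jtpP p) atTop (𝓝 (qPochInf p p)) := jtp_tendsto p p hp1
  have ht : Tendsto Int.toNat atTop atTop :=
    tendsto_atTop.mpr fun b => (eventually_ge_atTop (b : ℤ)).mono fun a ha => by omega
  refine ((hP.inv₀ (jtp_ne p hp1)).comp ht).congr' ?_
  filter_upwards [eventually_ge_atTop 0] with k hk
  simp [jtpQ, not_lt.mpr hk]

lemma jtpP_bdd (p : ℂ) (hp1 : ‖p‖ < 1) : ∃ C, ∀ N, ‖jtpP p N‖ ≤ C := by
  have hP : Tendsto (jtpP p) atTop (𝓝 (qPochInf p p)) := jtp_tendsto p p hp1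
  obtain ⟨C, hC⟩ := hP.norm.bddAbove_range
  exact ⟨C, fun N => hC ⟨N, rfl⟩⟩

lemma jtpQ_bdd (p : ℂ) (hp1 : ‖p‖ < 1) : ∃ C, 0 ≤ C ∧ ∀ k, ‖jtpQ p k‖ ≤ C := by
  have hP : Tendsto (jtpP p) atTop (𝓝 (qPochInf p p)) := jtp_tendsto p p hp1
  obtain ⟨C, hC⟩ := (hP.inv₀ (jtp_ne p hp1)).norm.bddAbove_range
  have h0 : 0 ≤ C := (norm_nonneg _).trans (hC ⟨0, rfl⟩)
  refine ⟨C, h0, fun k => ?_⟩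
  unfold jtpQ
  split_ifs
  · simpa using h0
  · exact hC ⟨k.toNat, rfl⟩

/-- (Jacobi triple product.)  For `0 < |p| < 1` and `x ≠ 0`:
`(p; p)_∞ · θ(x; p) = ∑_{n ∈ ℤ} (-x)^n p^{n(n-1)/2}`. -/
theorem jacobi_triple_product (p x : ℂ) (hp0 : 0 < ‖p‖) (hp1 : ‖p‖ < 1) (hx : x ≠ 0) :
    qPochInf p p * theta x p = ∑' n : ℤ, (-x) ^ n * p ^ (n * (n - 1) / 2) := by
  have hp : p ≠ 0 := norm_pos_iff.mp hp0
  have hL := jtp_ne p hp1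
  obtain ⟨C, hC⟩ := jtpP_bdd p hp1
  obtain ⟨D, hD0, hD⟩ := jtpQ_bdd p hp1
  have hC0 : 0 ≤ C := (norm_nonneg _).trans (hC 0)
  have hP : Tendsto (jtpP p) atTop (𝓝 (qPochInf p p)) := jtp_tendsto p p hp1
  have hQ := jtpQ_tendsto p hp1
  have key := tendsto_tsum_of_dominated_convergence (𝓕 := atTop)
    (f := fun (N : ℕ) (n : ℤ) =>
      jtpG p x n * (jtpP p (2 * N) * jtpQ p (N + n) * jtpQ p (N - n)))
    (g := fun n => jtpG p x n * (qPochInf p p * (qPochInf p p)⁻¹ * (qPochInf p p)⁻¹))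
    (bound := fun n => ‖jtpG p x n‖ * (C * D * D))
    ((jtpG_summable p x hp hp1 hx).mul_right _)
    (by
      intro n
      refine Tendsto.const_mul _ (Tendsto.mul (Tendsto.mul ?_ ?_) ?_)
      · exact hP.comp (tendsto_id.const_mul_atTop' (by norm_num))
      · exact hQ.comp (tendsto_atTop_add_const_right _ n tendsto_natCast_atTop_atTop)
      · exact hQ.comp (tendsto_atTop_add_const_right _ (-n) tendsto_natCast_atTop_atTop))
    (by
      refine Eventually.of_forall fun N n => ?_
      simp only [norm_mul]
      gcongr
      · exact hC _
      · exact hD _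
      · exact hD _)
  have h2 := (jtp_tendsto p x hp1).mul (jtp_tendsto p (p / x) hp1)
  have h3 := tendsto_nhds_unique h2
    (key.congr fun N => (jtp_finite p x hp hp1 hx N).tsum_eq)
  rw [tsum_mul_right, mul_inv_cancel₀ hL, one_mul] at h3
  rw [theta, h3]
  simp only [jtpG]
  field_simp
end
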